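/- Let m be a positive integer and let P be a centrally symmetric convex 2m-gon in the Euclidean plane. If P admits a k-fold translative tiling of the plane for some positive integer k, then k ≥ m−1 when m is even, and k ≥ m−2 when m is odd. (Equivalently, τ(P) ≥ m−1 if m is even and τ(P) ≥ m−2 if m is odd.) -/

import Mathlib

open Pointwise

/-- `K + X` is a `k`-fold translative tiling of the plane: the translate multiset
`(x i)` is discrete, every point of the plane belongs to at least `k` of the translates
`K + x i`, and every point belongs to at most `k` of the translates `interior K + x i`
(multiplicity counted over the index set). -/
def IsKFoldTranslativeTiling {ι : Type} (K : Set (ℝ × ℝ)) (x : ι → ℝ × ℝ) (k : ℕ) : Prop :=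
  (∀ R : ℝ, {i : ι | ‖x i‖ ≤ R}.Finite) ∧
  (∀ p : ℝ × ℝ, ∃ s : Finset ι, k ≤ s.card ∧ ∀ i ∈ s, p - x i ∈ K) ∧
  (∀ p : ℝ × ℝ, ∀ s : Finset ι, (∀ i ∈ s, p - x i ∈ interior K) → s.card ≤ k)

/-- `P` is a (two-dimensional) convex polygon whose vertex set is the finite set `V`:
`P` is the convex hull of `V`, every element of `V` is an extreme point of `P`
(so `V` is exactly the vertex set), and `P` has nonempty interior. -/
def IsConvexPolygon (P : Set (ℝ × ℝ)) (V : Finset (ℝ × ℝ)) : Prop :=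
  P = convexHull ℝ (V : Set (ℝ × ℝ)) ∧
  (∀ v ∈ V, v ∈ Set.extremePoints ℝ P) ∧
  (interior P).Nonempty

/-- `P` is symmetric about some point `c`. -/
def IsCentrallySymmetric (P : Set (ℝ × ℝ)) : Prop :=
  ∃ c : ℝ × ℝ, ∀ p ∈ P, 2 • c - p ∈ P

/-- The segment `[a, b]` is an edge of the convex polygon `P` with vertex set `V`. -/
def IsEdge (P : Set (ℝ × ℝ)) (V : Finset (ℝ × ℝ)) (a b : ℝ × ℝ) : Prop :=
  a ∈ V ∧ b ∈ V ∧ a ≠ b ∧ segment ℝ a b ⊆ frontier P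

/-- Standing assumptions: `P` is an origin-symmetric convex polygon with vertex set `V`. -/
structure SymPoly (P : Set (ℝ × ℝ)) (V : Finset (ℝ × ℝ)) : Prop where
  conv : Convex ℝ P
  closed : IsClosed P
  bdd : Bornology.IsBounded P
  sym : ∀ p ∈ P, -p ∈ P
  zero : (0 : ℝ × ℝ) ∈ interior P
  hull : P = convexHull ℝ (V : Set (ℝ × ℝ))
  ext : ∀ v, v ∈ V ↔ v ∈ Set.extremePoints ℝ P

namespace SymPoly

variable {P : Set (ℝ × ℝ)} {V : Finset (ℝ × ℝ)}

lemma vmem (h : SymPoly P V) {v : ℝ × ℝ} (hv : v ∈ V) : v ∈ P :=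
  ((h.ext v).1 hv).1

/-- A ray from an interior point stays in the interior up to its end. -/
lemma int_ray (h : SymPoly P V) {y u : ℝ × ℝ} {s t : ℝ} (hy : y ∈ interior P)
    (hq : y + t • u ∈ P) (hs : 0 ≤ s) (hst : s < t) : y + s • u ∈ interior P := by
  have ht : 0 < t := lt_of_le_of_lt hs hst
  have := h.conv.combo_interior_closure_mem_interior hy (subset_closure hq)
    (a := 1 - s / t) (b := s / t) (by rw [sub_pos, div_lt_one ht]; exact hst)
    (by positivity) (by ring)
  convert this using 1
  ext <;> simp <;> field_simp <;> ring

/-- A vertex is not strictly between two points of `P`. -/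
lemma ext_line (h : SymPoly P V) {v u : ℝ × ℝ} {s t : ℝ} (hv : v ∈ V) (hu : u ≠ 0)
    (hs : 0 < s) (ht : 0 < t) (h1 : v + s • u ∈ P) (h2 : v - t • u ∈ P) : False := by
  have hE := ((h.ext v).1 hv).2 h1 h2 (by
    refine ⟨t / (s + t), s / (s + t), by positivity, by positivity, by field_simp; ring, ?_⟩
    ext <;> simp <;> field_simp <;> ring)
  have : s • u = 0 := by simpa using hE
  rcases smul_eq_zero.1 this with h | h
  · exact hs.ne' h
  · exact hu h

lemma neg_int (h : SymPoly P V) {q : ℝ × ℝ} (hq : q ∈ interior P) : -q ∈ interior P := by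
  have hP : -P = P := by
    ext z
    constructor
    · intro hz
      have := h.sym _ hz
      simpa using this
    · intro hz
      exact h.sym _ hz
  have h2 : interior P = -interior P := by
    conv_lhs => rw [← hP]
    exact ((Homeomorph.neg (ℝ × ℝ)).preimage_interior P).symm
  rw [h2]
  simpa using hq

lemma vertex_not_int (h : SymPoly P V) {v : ℝ × ℝ} (hv : v ∈ V) : v ∉ interior P := by
  intro hi
  have h1 : ∀ᶠ e : ℝ in nhds 0, v + e • ((1, 0) : ℝ × ℝ) ∈ P := by
    have hc : Filter.Tendsto (fun e : ℝ => v + e • ((1, 0) : ℝ × ℝ)) (nhds 0) (nhds v) := by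
      have : Continuous (fun e : ℝ => v + e • ((1, 0) : ℝ × ℝ)) := by fun_prop
      simpa using this.tendsto 0
    exact hc (mem_interior_iff_mem_nhds.1 hi)
  obtain ⟨d, hd, hd'⟩ := Metric.eventually_nhds_iff.1 h1
  have a1 := @hd' (d/2) (by simp [abs_of_pos hd]; linarith)
  have a2 := @hd' (-(d/2)) (by simp [abs_of_pos hd]; linarith)
  refine h.ext_line hv (u := (1, 0)) (by simp) (half_pos hd) (half_pos hd) a1 ?_
  rwa [neg_smul, ← sub_eq_add_neg] at a2

lemma neg_vertex (h : SymPoly P V) {v : ℝ × ℝ} (hv : v ∈ V) : -v ∈ V := by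
  have hE := (h.ext v).1 hv
  refine (h.ext (-v)).2 ⟨h.sym _ hE.1, ?_⟩
  intro a ha b hb hab
  have := hE.2 (h.sym _ ha) (h.sym _ hb) (by
    obtain ⟨s, t, hs, ht, hst, he⟩ := hab
    refine ⟨s, t, hs, ht, hst, ?_⟩
    rw [smul_neg, smul_neg, ← neg_add, he, neg_neg])
  rw [← this, neg_neg]

lemma vertex_ne_zero (h : SymPoly P V) {v : ℝ × ℝ} (hv : v ∈ V) : v ≠ 0 := by
  rintro rfl
  exact h.vertex_not_int hv h.zero

/-- Every vertex is strictly exposed. -/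
lemma exposed (h : SymPoly P V) {v : ℝ × ℝ} (hv : v ∈ V) :
    ∃ a b : ℝ, ∀ q ∈ P, q ≠ v → a * q.1 + b * q.2 < a * v.1 + b * v.2 := by
  classical
  have hE := (h.conv.mem_extremePoints_iff_mem_sdiff_convexHull_sdiff).1 ((h.ext v).1 hv)
  have hnot : v ∉ convexHull ℝ ((V.erase v : Finset (ℝ × ℝ)) : Set (ℝ × ℝ)) := by
    intro hc
    apply hE.2
    refine convexHull_mono ?_ hc
    intro w hw
    simp only [Finset.coe_erase, Set.mem_sdiff, Finset.mem_coe, Set.mem_singleton_iff] at hw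
    exact ⟨h.vmem hw.1, hw.2⟩
  have hcl : IsClosed (convexHull ℝ ((V.erase v : Finset (ℝ × ℝ)) : Set (ℝ × ℝ))) :=
    ((V.erase v).finite_toSet.isCompact_convexHull ℝ).isClosed
  obtain ⟨f, r, hf, hr⟩ := geometric_hahn_banach_closed_point (convex_convexHull ℝ _) hcl hnot
  have hfv : ∀ z : ℝ × ℝ, f z = f (1, 0) * z.1 + f (0, 1) * z.2 := by
    intro z
    have : z = z.1 • ((1, 0) : ℝ × ℝ) + z.2 • ((0, 1) : ℝ × ℝ) := by ext <;> simp
    conv_lhs => rw [this]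
    rw [map_add, map_smul, map_smul]
    simp [mul_comm]
  refine ⟨f (1, 0), f (0, 1), ?_⟩
  intro q hq hqv
  rw [← hfv, ← hfv]
  have hq' : q ∈ convexHull ℝ (insert v ((V.erase v : Finset (ℝ × ℝ)) : Set (ℝ × ℝ))) := by
    rw [← Finset.coe_insert, Finset.insert_erase hv, ← h.hull]
    exact hq
  by_cases hne : ((V.erase v : Finset (ℝ × ℝ)) : Set (ℝ × ℝ)).Nonempty
  · rw [convexHull_insert hne, mem_convexJoin] at hq'
    obtain ⟨a, ha, w, hw, s, t, hs, ht, hst, rfl⟩ := hq'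
    rw [Set.mem_singleton_iff] at ha
    subst ha
    have hfw := (hf w hw).trans hr
    have ht0 : t ≠ 0 := by
      rintro rfl
      apply hqv
      have : s = 1 := by linarith
      simp [this]
    have htp : 0 < t := lt_of_le_of_ne ht (Ne.symm ht0)
    rw [map_add, map_smul, map_smul, smul_eq_mul, smul_eq_mul]
    have : s = 1 - t := by linarith
    subst this
    nlinarith
  · rw [Set.not_nonempty_iff_eq_empty.1 hne] at hq'
    simp at hq'
    exact absurd hq' hqv

/-- Existence of an edge `[v', v]`, described through its supporting line. -/
lemma exists_edge (h : SymPoly P V) (hc : 2 ≤ V.card) :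
    ∃ v' ∈ V, ∃ v ∈ V, v ≠ v' ∧
      ∀ w ∈ V, 0 ≤ (v - v').1 * (w - v').2 - (v - v').2 * (w - v').1 := by
  classical
  obtain ⟨v', hv'⟩ : V.Nonempty := Finset.card_pos.1 (by omega)
  obtain ⟨a, b, hab⟩ := h.exposed hv'
  have hne : (V.erase v').Nonempty := by
    apply Finset.card_pos.1
    rw [Finset.card_erase_of_mem hv']
    omega
  obtain ⟨v, hv, hmax⟩ := Finset.exists_max_image (V.erase v')
    (fun w => (a * (w - v').2 - b * (w - v').1) /
      ((a * v'.1 + b * v'.2) - (a * w.1 + b * w.2))) hne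
  obtain ⟨hvv', hvV⟩ := Finset.mem_erase.1 hv
  have key := hab v (h.vmem hvV) hvv'
  have hab0 : 0 < a ^ 2 + b ^ 2 := by
    by_contra hcon
    have ha : a = 0 := by nlinarith [sq_nonneg a, sq_nonneg b]
    have hb : b = 0 := by nlinarith [sq_nonneg a, sq_nonneg b]
    subst ha hb
    simp at key
  refine ⟨v', hv', v, hvV, hvv', ?_⟩
  intro w hw
  by_cases hww : w = v'
  · subst hww; simp
  have h1 := hmax w (Finset.mem_erase.2 ⟨hww, hw⟩)
  have key2 := hab w (h.vmem hw) hww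
  rw [div_le_div_iff₀ (by linarith) (by linarith)] at h1
  simp only [Prod.fst_sub, Prod.snd_sub] at h1 ⊢
  by_contra hcon
  push Not at hcon
  nlinarith [mul_neg_of_pos_of_neg hab0 hcon]

end SymPoly

namespace SymPoly

variable {P : Set (ℝ × ℝ)} {V : Finset (ℝ × ℝ)}

lemma smul_int (h : SymPoly P V) {z : ℝ × ℝ} (hz : z ∈ P) {s : ℝ} (hs : |s| < 1) :
    s • z ∈ interior P := by
  rw [abs_lt] at hs
  rcases le_or_gt 0 s with h0 | h0
  · have := h.int_ray (y := 0) (u := z) (s := s) (t := 1) h.zero (by simpa using hz) h0 hs.2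
    simpa using this
  · have := h.int_ray (y := 0) (u := -z) (s := -s) (t := 1) h.zero
      (by simpa using h.sym _ hz) (by linarith) (by linarith)
    simpa using this

lemma side (h : SymPoly P V) {y q u : ℝ × ℝ} {t : ℝ} (hy : y ∈ interior P) (ht : 0 < t)
    (hqe : q = y + t • u) (hq : q ∈ P) (hqi : q ∉ interior P) {e : ℝ} (he : 0 < e) (het : e < t) :
    q + e • u ∉ P ∧ q - e • u ∈ interior P := by
  subst hqe
  constructor
  · intro hc
    apply hqi
    refine h.int_ray (t := t + e) hy ?_ ht.le (by linarith)
    rwa [add_smul, ← add_assoc]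
  · have := h.int_ray (s := t - e) hy hq (by linarith) (by linarith)
    rwa [sub_smul, ← add_sub_assoc] at this

lemma tendsto_line (q u : ℝ × ℝ) :
    Filter.Tendsto (fun e : ℝ => q + e • u) (nhdsWithin 0 (Set.Ioi 0)) (nhds q) := by
  have : Continuous (fun e : ℝ => q + e • u) := by fun_prop
  have h2 := this.tendsto 0
  simp only [zero_smul, add_zero] at h2
  exact h2.mono_left nhdsWithin_le_nhds

lemma tendsto_line' (q u : ℝ × ℝ) :
    Filter.Tendsto (fun e : ℝ => q - e • u) (nhdsWithin 0 (Set.Ioi 0)) (nhds q) := by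
  have : Continuous (fun e : ℝ => q - e • u) := by fun_prop
  have h2 := this.tendsto 0
  simp only [zero_smul, sub_zero] at h2
  exact h2.mono_left nhdsWithin_le_nhds

open Classical in
lemma local_count (h : SymPoly P V) {v : ℝ × ℝ} (hv : v ∈ V) :
    ∃ u : ℝ × ℝ, ∀ q : ℝ × ℝ, ∀ᶠ e : ℝ in nhdsWithin 0 (Set.Ioi 0),
      (q + e • u ∈ P → q + e • u ∈ interior P) ∧
      (q - e • u ∈ P → q - e • u ∈ interior P) ∧
      (if q + e • u ∈ P then 1 else 0) + (if q - e • u ∈ P then 1 else 0) +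
        (if q = v then 1 else 0) + (if q = -v then 1 else 0) =
      2 * (if q ∈ interior P then 1 else 0) +
        (if q ∈ P ∧ q ∉ interior P ∧ q ∉ V then 1 else 0) + (if q ∈ V then 1 else 0) := by
  obtain ⟨a, b, hab⟩ := h.exposed hv
  have hv0 := h.vertex_ne_zero hv
  have hM : 0 < a * v.1 + b * v.2 := by
    have := hab 0 (interior_subset h.zero) (Ne.symm hv0)
    simpa using this
  have hab0 : 0 < a ^ 2 + b ^ 2 := by
    by_contra hcon
    have ha : a = 0 := by nlinarith [sq_nonneg a, sq_nonneg b]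
    have hb : b = 0 := by nlinarith [sq_nonneg a, sq_nonneg b]
    subst ha hb
    simp at hM
  have hnv := h.neg_vertex hv
  have hvnv : v ≠ -v := by
    intro hc
    exact hv0 (self_eq_neg.1 hc)
  set u : ℝ × ℝ := (-b, a) with hu
  have hu0 : u ≠ 0 := by
    intro hc
    rw [hu, Prod.mk_eq_zero] at hc
    obtain ⟨h1, h2⟩ := hc
    subst h2
    have : b = 0 := by linarith
    subst this
    simp at hab0
  have hfu : ∀ (q : ℝ × ℝ) (e : ℝ),
      a * (q + e • u).1 + b * (q + e • u).2 = a * q.1 + b * q.2 := by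
    intro q e
    simp [hu]; ring
  have hout : ∀ e : ℝ, e ≠ 0 → v + e • u ∉ P := by
    intro e he hc
    have := hab _ hc (by
      intro h1
      have : e • u = 0 := by simpa using h1
      rcases smul_eq_zero.1 this with h | h
      · exact he h
      · exact hu0 h)
    rw [hfu] at this
    exact lt_irrefl _ this
  refine ⟨u, fun q => ?_⟩
  have hpos : ∀ᶠ e : ℝ in nhdsWithin 0 (Set.Ioi 0), 0 < e := self_mem_nhdsWithin
  by_cases hqP : q ∈ P
  swap
  · have ho : Pᶜ ∈ nhds q := h.closed.isOpen_compl.mem_nhds hqP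
    filter_upwards [tendsto_line q u ho, tendsto_line' q u ho] with e h1 h2
    have h1 : q + e • u ∉ P := h1
    have h2 : q - e • u ∉ P := h2
    have h3 : q ∉ V := fun hc => hqP (h.vmem hc)
    have h4 : q ∉ interior P := fun hc => hqP (interior_subset hc)
    have h5 : q ≠ v := fun hc => h3 (hc ▸ hv)
    have h6 : q ≠ -v := fun hc => h3 (hc ▸ hnv)
    simp [h1, h2, h3, h4, h5, h6, hqP]
  by_cases hqi : q ∈ interior P
  · have ho : interior P ∈ nhds q := isOpen_interior.mem_nhds hqi
    filter_upwards [tendsto_line q u ho, tendsto_line' q u ho] with e h1 h2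
    have h1 : q + e • u ∈ interior P := h1
    have h2 : q - e • u ∈ interior P := h2
    have h3 : q ∉ V := fun hc => h.vertex_not_int hc hqi
    have h5 : q ≠ v := fun hc => h3 (hc ▸ hv)
    have h6 : q ≠ -v := fun hc => h3 (hc ▸ hnv)
    simp [h1, h2, h3, h5, h6, hqi, interior_subset h1, interior_subset h2]
  by_cases hqv : q = v
  · filter_upwards [hpos] with e he
    subst hqv
    have h1 := hout e he.ne'
    have h2 := hout (-e) (by linarith)
    rw [neg_smul, ← sub_eq_add_neg] at h2
    simp [h1, h2, hqi, hv, hvnv]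
  by_cases hqv' : q = -v
  · filter_upwards [hpos] with e he
    have h1 : q + e • u ∉ P := by
      intro hc
      apply hout (-e) (by linarith)
      have := h.sym _ hc
      rw [hqv'] at this
      convert this using 1
      rw [neg_add, neg_neg, neg_smul]
    have h2 : q - e • u ∉ P := by
      intro hc
      apply hout e (by linarith)
      have := h.sym _ hc
      rw [hqv'] at this
      convert this using 1
      rw [neg_sub, sub_neg_eq_add, add_comm]
    have h3 : q ∈ V := hqv' ▸ hnv
    refine ⟨fun hc => absurd hc h1, fun hc => absurd hc h2, ?_⟩
    rw [if_neg h1, if_neg h2, if_neg hqv, if_pos hqv', if_neg hqi, if_neg (by tauto), if_pos h3]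
  -- the main case
  have hf1 := hab q hqP hqv
  have hf2 := hab (-q) (h.sym _ hqP) (fun hc => hqv' (by rw [← hc, neg_neg]))
  simp only [Prod.fst_neg, Prod.snd_neg] at hf2
  set M := a * v.1 + b * v.2 with hMdef
  set c := (a * q.1 + b * q.2) / M with hc
  have hcM : c * M = a * q.1 + b * q.2 := by rw [hc]; field_simp
  have hy : c • v ∈ interior P := by
    apply h.smul_int (h.vmem hv)
    rw [abs_lt]
    constructor
    · nlinarith
    · nlinarith
  set t := (-b * (q.1 - c * v.1) + a * (q.2 - c * v.2)) / (a ^ 2 + b ^ 2) with ht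
  have hqe : q = c • v + t • u := by
    have h1 : a * (q.1 - c * v.1) + b * (q.2 - c * v.2) = 0 := by
      rw [hMdef] at hcM; linarith
    have h3 : t * (a ^ 2 + b ^ 2) = -b * (q.1 - c * v.1) + a * (q.2 - c * v.2) := by
      rw [ht]; field_simp
    ext
    · simp only [Prod.fst_add, Prod.smul_fst, smul_eq_mul, hu]
      have : (q.1 - (c * v.1 + t * -b)) * (a ^ 2 + b ^ 2) = 0 := by linear_combination a * h1 + b * h3
      rcases mul_eq_zero.1 this with h | h <;> linarith
    · simp only [Prod.snd_add, Prod.smul_snd, smul_eq_mul, hu]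
      have : (q.2 - (c * v.2 + t * a)) * (a ^ 2 + b ^ 2) = 0 := by linear_combination b * h1 - a * h3
      rcases mul_eq_zero.1 this with h | h <;> linarith
  have ht0 : t ≠ 0 := by
    intro h0
    rw [h0, zero_smul, add_zero] at hqe
    rw [hqe] at hqi
    exact hqi hy
  have hsmall : ∀ᶠ e : ℝ in nhdsWithin 0 (Set.Ioi 0), e < |t| :=
    nhdsWithin_le_nhds (gt_mem_nhds (abs_pos.2 ht0))
  filter_upwards [hpos, hsmall] with e he het
  rcases lt_or_gt_of_ne ht0 with htn | htp
  · rw [abs_of_neg htn] at het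
    have := h.side (u := -u) (t := -t) hy (by linarith) (by simpa using hqe) hqP hqi he het
    simp only [smul_neg, sub_neg_eq_add, ← sub_eq_add_neg] at this
    obtain ⟨h1, h2⟩ := this
    by_cases h3 : q ∈ V <;> simp [h1, h2, hqi, hqv, hqv', h3, hqP, interior_subset h2]
  · rw [abs_of_pos htp] at het
    obtain ⟨h1, h2⟩ := h.side hy htp hqe hqP hqi he het
    by_cases h3 : q ∈ V <;> simp [h1, h2, hqi, hqv, hqv', h3, hqP, interior_subset h2]

/-- Chord lemma for the edge `[v', v]`. -/
lemma chord (h : SymPoly P V) {v v' : ℝ × ℝ} (hv : v ∈ V) (hv' : v' ∈ V)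
    (hne : v ≠ v') (hcard : 4 < V.card)
    (hsup : ∀ w ∈ V, 0 ≤ (v - v').1 * (w - v').2 - (v - v').2 * (w - v').1) :
    ∀ q ∈ P, q ∉ interior P → ∀ e : ℝ, 0 < e → q + e • (v - v') ∈ P →
      (q + (v - v') ∈ interior P) ∨
        (q + e • (v - v') ∉ interior P ∧ (q ∈ V → q = v' ∨ q = -v)) := by
  classical
  set d := v - v' with hd
  have hd0 : d ≠ 0 := sub_ne_zero.2 hne
  have hdd : 0 < d.1 ^ 2 + d.2 ^ 2 := by
    by_contra hcon
    apply hd0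
    have ha : d.1 = 0 := by nlinarith [sq_nonneg d.1, sq_nonneg d.2]
    have hb : d.2 = 0 := by nlinarith [sq_nonneg d.1, sq_nonneg d.2]
    ext <;> simp [ha, hb]
  have hvd : v = v' + d := by rw [hd]; abel
  obtain ⟨f, hf⟩ : ∃ f : (ℝ × ℝ) →ₗ[ℝ] ℝ, ∀ z, f z = d.2 * z.1 - d.1 * z.2 :=
    ⟨{ toFun := fun z => d.2 * z.1 - d.1 * z.2
       map_add' := by intro x y; simp; ring
       map_smul' := by intro x y; simp; ring }, fun z => rfl⟩
  have hfd : f d = 0 := by rw [hf]; ring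
  set M := f v' with hMdef
  have hfv : f v = M := by rw [hvd, map_add, hfd, add_zero]
  have hfV : ∀ w ∈ V, f w ≤ M := by
    intro w hw
    have := hsup w hw
    rw [hMdef, hf, hf]
    simp only [Prod.fst_sub, Prod.snd_sub] at this
    linarith
  have hfP : ∀ w ∈ P, f w ≤ M := by
    intro w hw
    rw [h.hull] at hw
    have : convexHull ℝ (V : Set (ℝ × ℝ)) ⊆ {w | f w ≤ M} :=
      convexHull_min hfV (convex_halfSpace_le f.isLinear M)
    exact this hw
  have hfP' : ∀ w ∈ P, -M ≤ f w := by
    intro w hw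
    have := hfP _ (h.sym _ hw)
    rw [map_neg] at this
    linarith
  have hker : ∀ z, f z = 0 → ∃ t : ℝ, z = t • d := by
    intro z hz
    rw [hf] at hz
    refine ⟨(d.1 * z.1 + d.2 * z.2) / (d.1 ^ 2 + d.2 ^ 2), ?_⟩
    ext
    · simp only [Prod.smul_fst, smul_eq_mul]
      field_simp
      linear_combination d.2 * hz
    · simp only [Prod.smul_snd, smul_eq_mul]
      field_simp
      linear_combination -d.1 * hz
  have hM : 0 < M := by
    have hM0 : 0 ≤ M := by
      have := hfP 0 (interior_subset h.zero)
      simpa using this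
    rcases hM0.lt_or_eq with h1 | h1
    · exact h1
    exfalso
    have hz : ∀ w ∈ P, f w = 0 := fun w hw => by
      have h2 := hfP w hw
      have h3 := hfP' w hw
      linarith
    have hev := (tendsto_line 0 ((d.2, -d.1) : ℝ × ℝ)).eventually_mem (mem_interior_iff_mem_nhds.1 h.zero)
    have hpos : ∀ᶠ e : ℝ in nhdsWithin 0 (Set.Ioi 0), 0 < e := self_mem_nhdsWithin
    obtain ⟨e, he, hep⟩ := (Filter.Eventually.and hev hpos).exists
    have h2 := hz _ he
    rw [zero_add, map_smul, hf, smul_eq_mul] at h2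
    rcases mul_eq_zero.1 h2 with h3 | h3
    · linarith
    · simp at h3; nlinarith
  -- vertices on the supporting line
  have htop : ∀ w ∈ V, f w = M → w = v' ∨ w = v := by
    intro w hw hwM
    obtain ⟨t, ht⟩ := hker (w - v') (by rw [map_sub, hwM, hMdef, sub_self])
    have hwe : w = v' + t • d := by rw [← ht]; abel
    by_contra hcon
    push Not at hcon
    have ht0 : t ≠ 0 := by rintro rfl; apply hcon.1; simpa using hwe
    have ht1 : t ≠ 1 := by rintro rfl; apply hcon.2; rw [hwe, hvd, one_smul]
    rcases lt_or_gt_of_ne ht0 with h0 | h0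
    · refine h.ext_line hv' hd0 (s := 1) (t := -t) one_pos (by linarith) ?_ ?_
      · rw [one_smul, ← hvd]; exact h.vmem hv
      · rw [neg_smul, sub_neg_eq_add, ← hwe]; exact h.vmem hw
    rcases lt_or_gt_of_ne ht1 with h1 | h1
    · refine h.ext_line hw hd0 (s := 1 - t) (t := t) (by linarith) h0 ?_ ?_
      · rw [hwe, add_assoc, ← add_smul]; simp only [add_sub_cancel, one_smul]; rw [← hvd]
        exact h.vmem hv
      · rw [hwe, add_sub_cancel_right]; exact h.vmem hv'
    · refine h.ext_line hv hd0 (s := t - 1) (t := 1) (by linarith) one_pos ?_ ?_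
      · rw [hvd, add_assoc, ← one_smul ℝ d, smul_smul, ← add_smul]
        simp only [mul_one, add_sub_cancel]
        rw [← hwe]; exact h.vmem hw
      · rw [hvd, one_smul, add_sub_cancel_right]; exact h.vmem hv'
  -- the midpoint of the edge
  set c : ℝ × ℝ := v' + (1 / 2 : ℝ) • d with hc
  have hfc : f c = M := by rw [hc, map_add, map_smul, hfd, smul_zero, add_zero]
  have hcd : ∀ s : ℝ, |s| ≤ 1 / 2 → c + s • d ∈ P := by
    intro s hs
    rw [abs_le] at hs
    have := h.conv (h.vmem hv') (h.vmem hv) (a := 1 / 2 - s) (b := 1 / 2 + s)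
      (by linarith) (by linarith) (by ring)
    convert this using 1
    rw [hc, hvd]
    ext <;> simp <;> ring
  have hcP : c ∈ P := by simpa using hcd 0 (by norm_num)
  have hdec : ∀ z, ∃ t : ℝ, z = (f z / M) • c + t • d := by
    intro z
    obtain ⟨t, ht⟩ := hker (z - (f z / M) • c) (by
      rw [map_sub, map_smul, hfc, smul_eq_mul]; field_simp; ring)
    exact ⟨t, by rw [← ht]; abel⟩
  have hcnd : ∀ s : ℝ, |s| ≤ 1 / 2 → -c + s • d ∈ P := by
    intro s hs
    have := h.sym _ (hcd (-s) (by rwa [abs_neg]))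
    convert this using 1
    module
  -- a further vertex
  obtain ⟨w, hw, hw4⟩ : ∃ w ∈ V, w ∉ ({v, v', -v, -v'} : Finset (ℝ × ℝ)) := by
    by_contra hcon
    push Not at hcon
    have := Finset.card_le_card (show V ⊆ _ from hcon)
    have := Finset.card_le_four (a := v) (b := v') (c := -v) (d := -v')
    omega
  simp only [Finset.mem_insert, Finset.mem_singleton, not_or] at hw4
  obtain ⟨hw1, hw2, hw3, hw5⟩ := hw4
  -- a point left of the parallelogram
  obtain ⟨w, hw, hfw1, hfw2, r, hwr, hr⟩ : ∃ w ∈ P, f w < M ∧ -M < f w ∧ ∃ r : ℝ,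
      w = (f w / M) • c + r • d ∧ r < -(1 / 2) := by
    have hlt : f w < M := lt_of_le_of_ne (hfV w hw) (fun hcon => by
      rcases htop w hw hcon with h1 | h1
      · exact hw2 h1
      · exact hw1 h1)
    have hgt : -M < f w := lt_of_le_of_ne (hfP' w (h.vmem hw)) (fun hcon => by
      rcases htop (-w) (h.neg_vertex hw) (by rw [map_neg, ← hcon, neg_neg]) with h1 | h1
      · exact hw5 (by rw [← h1, neg_neg])
      · exact hw3 (by rw [← h1, neg_neg]))
    obtain ⟨r, hwr⟩ := hdec w
    have hrr : 1 / 2 < |r| := by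
      by_contra hcon
      push Not at hcon
      have hc0 : c ≠ 0 := by
        intro h0
        rw [h0, map_zero] at hfc
        linarith
      refine h.ext_line hw hc0 (s := 1 - f w / M) (t := 1 + f w / M) ?_ ?_ ?_ ?_
      · rw [sub_pos, div_lt_one hM]; exact hlt
      · have : -1 < f w / M := by rw [lt_div_iff₀ hM]; linarith
        linarith
      · convert hcd r hcon using 1
        nth_rewrite 1 [hwr]
        module
      · convert hcnd r hcon using 1
        nth_rewrite 1 [hwr]
        module
    rcases lt_abs.1 hrr with h1 | h1
    · refine ⟨-w, h.sym _ (h.vmem hw), by rw [map_neg]; linarith, by rw [map_neg]; linarith,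
        -r, ?_, by linarith⟩
      nth_rewrite 1 [hwr]
      rw [map_neg]
      module
    · exact ⟨w, h.vmem hw, hlt, hgt, r, hwr, by linarith⟩
  -- every intermediate chord extends to the left of the parallelogram
  have hleft : ∀ g : ℝ, -M < g → g < M → ∃ s : ℝ, s < -(1 / 2) ∧ (g / M) • c + s • d ∈ P := by
    intro g hg1 hg2
    rcases le_or_gt (f w) g with hgw | hgw
    · have hD : 0 < M - f w := by linarith
      set θ := (M - g) / (M - f w) with hθ
      have hθ0 : 0 < θ := div_pos (by linarith) hD
      have hθ1 : θ ≤ 1 := by rw [hθ, div_le_one hD]; linarith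
      have hθe : θ * (M - f w) = M - g := by rw [hθ]; field_simp
      refine ⟨θ * r + (1 - θ) * (-(1 / 2)), by nlinarith, ?_⟩
      have := h.conv hw (hcd (-(1 / 2)) (by rw [abs_neg, abs_of_pos] <;> norm_num))
        hθ0.le (by linarith : 0 ≤ 1 - θ) (by ring)
      convert this using 1
      have hg : g / M = θ * (f w / M) + (1 - θ) := by
        field_simp; linarith
      nth_rewrite 1 [hwr]
      rw [hg]
      module
    · have hD : 0 < M + f w := by linarith
      set θ := (M + g) / (M + f w) with hθ
      have hθ0 : 0 < θ := div_pos (by linarith) hD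
      have hθ1 : θ ≤ 1 := by rw [hθ, div_le_one hD]; linarith
      have hθe : θ * (M + f w) = M + g := by rw [hθ]; field_simp
      refine ⟨θ * r + (1 - θ) * (-(1 / 2)), by nlinarith, ?_⟩
      have := h.conv hw (hcnd (-(1 / 2)) (by rw [abs_neg, abs_of_pos] <;> norm_num))
        hθ0.le (by linarith : 0 ≤ 1 - θ) (by ring)
      convert this using 1
      have hg : g / M = θ * (f w / M) - (1 - θ) := by
        field_simp; linarith
      nth_rewrite 1 [hwr]
      rw [hg]
      module
  have hright : ∀ g : ℝ, -M < g → g < M → ∃ s : ℝ, 1 / 2 < s ∧ (g / M) • c + s • d ∈ P := by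
    intro g hg1 hg2
    obtain ⟨s, hs, hsP⟩ := hleft (-g) (by linarith) (by linarith)
    refine ⟨-s, by linarith, ?_⟩
    convert h.sym _ hsP using 1
    rw [neg_div]
    module
  intro q hq hqi e he hqe
  by_cases hlev : f q < M ∧ -M < f q
  · left
    obtain ⟨hl1, hl2⟩ := hlev
    obtain ⟨t, ht⟩ := hdec q
    set y := (f q / M) • c with hy
    have hyi : y ∈ interior P := by
      apply h.smul_int hcP
      rw [abs_div, abs_of_pos hM, div_lt_one hM, abs_lt]
      exact ⟨hl2, hl1⟩
    have htneg : t < 0 := by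
      by_contra hcon
      push Not at hcon
      apply hqi
      rw [ht]
      refine h.int_ray (t := t + e) hyi ?_ hcon (by linarith)
      rwa [add_smul, ← add_assoc, ← ht]
    obtain ⟨s1, hs1, hs1P⟩ := hleft (f q) hl2 hl1
    obtain ⟨s2, hs2, hs2P⟩ := hright (f q) hl2 hl1
    have ht2 : t < -(1 / 2) := by
      by_contra hcon
      push Not at hcon
      apply hqi
      rw [ht]
      have := h.int_ray (u := -d) (s := -t) (t := -s1) hyi (by simpa using hs1P)
        (by linarith) (by linarith)
      simpa using this
    have hqd : q + d = y + (1 + t) • d := by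
      rw [ht]; module
    rw [hqd]
    rcases le_or_gt 0 (1 + t) with h1 | h1
    · exact h.int_ray hyi hs2P h1 (by linarith)
    · have := h.int_ray (u := -d) (s := -(1 + t)) (t := -t) hyi
        (by rw [neg_smul_neg, ← ht]; exact hq) (by linarith) (by linarith)
      rwa [neg_smul_neg] at this
  · right
    have hfe : ∀ s : ℝ, f (q + s • d) = f q := by
      intro s
      rw [map_add, map_smul, hfd, smul_zero, add_zero]
    have hE : f q = M ∨ f q = -M := by
      by_contra hcon
      push Not at hcon
      exact hlev ⟨lt_of_le_of_ne (hfP q hq) hcon.1, lt_of_le_of_ne (hfP' q hq) (Ne.symm hcon.2)⟩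
    constructor
    · intro hi
      -- scaling slightly out of an interior point leaves the strip
      have hev := (tendsto_line (q + e • d) (q + e • d)).eventually_mem (mem_interior_iff_mem_nhds.1 hi)
      have hpos : ∀ᶠ e : ℝ in nhdsWithin 0 (Set.Ioi 0), 0 < e := self_mem_nhdsWithin
      obtain ⟨s, hs, hsp⟩ := (Filter.Eventually.and hev hpos).exists
      have h1 := hfP _ hs
      have h2 := hfP' _ hs
      rw [map_add, map_smul, hfe, smul_eq_mul] at h1 h2
      rcases hE with h3 | h3 <;> rw [h3] at h1 h2 <;> nlinarith
    · intro hqV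
      rcases hE with h3 | h3
      · rcases htop q hqV h3 with h4 | h4
        · exact Or.inl h4
        · exfalso
          refine h.ext_line hqV hd0 (s := e) (t := 1) he one_pos hqe ?_
          rw [h4, hvd, one_smul, add_sub_cancel_right]
          exact h.vmem hv'
      · rcases htop (-q) (h.neg_vertex hqV) (by rw [map_neg, h3, neg_neg]) with h4 | h4
        · exfalso
          refine h.ext_line hqV hd0 (s := e) (t := 1) he one_pos hqe ?_
          have : q - (1 : ℝ) • d = -v := by
            rw [hvd, ← h4, one_smul]; abel
          rw [this]
          exact h.sym _ (h.vmem hv)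
        · right
          rw [← h4, neg_neg]

end SymPoly

namespace SymPoly

variable {P : Set (ℝ × ℝ)} {V : Finset (ℝ × ℝ)}

open Classical in
/-- Number of translates containing `p` in their interior. -/
noncomputable def rho {ι : Type} (P : Set (ℝ × ℝ)) (x : ι → ℝ × ℝ) (F : Finset ι)
    (p : ℝ × ℝ) : ℕ := ∑ i ∈ F, if p - x i ∈ interior P then 1 else 0

open Classical in
/-- Number of translates containing `p` in the relative interior of an edge. -/
noncomputable def ell {ι : Type} (P : Set (ℝ × ℝ)) (V : Finset (ℝ × ℝ)) (x : ι → ℝ × ℝ)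
    (F : Finset ι) (p : ℝ × ℝ) : ℕ :=
  ∑ i ∈ F, if p - x i ∈ P ∧ p - x i ∉ interior P ∧ p - x i ∉ V then 1 else 0

open Classical in
/-- Number of translates having `p` as a vertex. -/
noncomputable def kap {ι : Type} (V : Finset (ℝ × ℝ)) (x : ι → ℝ × ℝ)
    (F : Finset ι) (p : ℝ × ℝ) : ℕ :=
  ∑ i ∈ F, if p - x i ∈ V then 1 else 0

open Classical in
/-- Number of translates having `p` as the vertex `v`. -/
noncomputable def nv {ι : Type} (x : ι → ℝ × ℝ)
    (F : Finset ι) (p : ℝ × ℝ) (v : ℝ × ℝ) : ℕ :=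
  ∑ i ∈ F, if p - x i = v then 1 else 0

/-- The basic counting identity at a point. -/
lemma count (h : SymPoly P V) {ι : Type} {x : ι → ℝ × ℝ} {k : ℕ}
    (htile : IsKFoldTranslativeTiling P x k) {F : Finset ι} {L : ℝ}
    (hF : ∀ i z, ‖z‖ ≤ L + 1 → z - x i ∈ P → i ∈ F) {p : ℝ × ℝ} (hp : ‖p‖ ≤ L)
    {v : ℝ × ℝ} (hv : v ∈ V) :
    2 * k + (nv x F p v + nv x F p (-v)) = 2 * rho P x F p + ell P V x F p + kap V x F p := by
  classical
  obtain ⟨u, hu⟩ := h.local_count hv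
  have hev : ∀ᶠ e : ℝ in nhdsWithin 0 (Set.Ioi 0), ∀ i ∈ F, _ :=
    (Filter.eventually_all_finset F).2 (fun i _ => hu (p - x i))
  have hb1 := (tendsto_line p u).eventually_mem (Metric.closedBall_mem_nhds p one_pos)
  have hb2 := (tendsto_line' p u).eventually_mem (Metric.closedBall_mem_nhds p one_pos)
  obtain ⟨e, ⟨he, he1⟩, he2⟩ := ((hev.and hb1).and hb2).exists
  have hcount : ∀ z : ℝ × ℝ, z ∈ Metric.closedBall p 1 →
      (∀ i ∈ F, z - x i ∈ P → z - x i ∈ interior P) →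
      ∑ i ∈ F, (if z - x i ∈ P then 1 else 0) = k := by
    intro z hz hzi
    rw [← Finset.card_filter]
    have hzn : ‖z‖ ≤ L + 1 := by
      rw [Metric.mem_closedBall, dist_eq_norm] at hz
      have := norm_add_le p (z - p)
      rw [add_sub_cancel] at this
      linarith
    apply le_antisymm
    · apply htile.2.2 z
      intro i hi
      rw [Finset.mem_filter] at hi
      exact hzi i hi.1 hi.2
    · obtain ⟨s, hs, hsP⟩ := htile.2.1 z
      refine hs.trans (Finset.card_le_card ?_)
      intro i hi
      rw [Finset.mem_filter]
      exact ⟨hF i z hzn (hsP i hi), hsP i hi⟩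
  have c1 := hcount _ he1 (fun i hi => by
    have := (he i hi).1
    rwa [sub_add_eq_add_sub] at this)
  have c2 := hcount _ he2 (fun i hi => by
    have := (he i hi).2.1
    rwa [sub_right_comm] at this)
  have hsum := Finset.sum_congr rfl (fun i hi => (he i hi).2.2)
  simp only [Finset.sum_add_distrib, ← Finset.mul_sum] at hsum
  simp only [sub_add_eq_add_sub, sub_right_comm p _ (e • u)] at hsum
  rw [c1, c2] at hsum
  unfold nv rho ell kap
  omega

/-- All pairs of opposite vertices occur equally often at a point. -/
lemma count_all (h : SymPoly P V) {m : ℕ} (hm : 0 < m) (hV : V.card = 2 * m)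
    {ι : Type} {x : ι → ℝ × ℝ} {k : ℕ}
    (htile : IsKFoldTranslativeTiling P x k) {F : Finset ι} {L : ℝ}
    (hF : ∀ i z, ‖z‖ ≤ L + 1 → z - x i ∈ P → i ∈ F) {p : ℝ × ℝ} (hp : ‖p‖ ≤ L) :
    ∃ a : ℕ, (∀ v ∈ V, nv x F p v + nv x F p (-v) = a) ∧
      2 * k + a = 2 * rho P x F p + ell P V x F p + m * a := by
  classical
  obtain ⟨v0, hv0⟩ : V.Nonempty := Finset.card_pos.1 (by omega)
  have h0 := h.count htile hF hp hv0
  have hall : ∀ v ∈ V, nv x F p v + nv x F p (-v) = nv x F p v0 + nv x F p (-v0) := by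
    intro v hv
    have := h.count htile hF hp hv
    omega
  refine ⟨nv x F p v0 + nv x F p (-v0), hall, ?_⟩
  have hk1 : ∑ v ∈ V, nv x F p v = kap V x F p := by
    unfold nv kap
    rw [Finset.sum_comm]
    apply Finset.sum_congr rfl
    intro i _
    rw [Finset.sum_ite_eq]
  have hk2 : ∑ v ∈ V, nv x F p (-v) = ∑ v ∈ V, nv x F p v :=
    Finset.sum_nbij' (fun v => -v) (fun v => -v) (fun v hv => h.neg_vertex hv)
      (fun v hv => h.neg_vertex hv) (by simp) (by simp) (by simp)
  have hs := Finset.sum_congr rfl hall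
  rw [Finset.sum_add_distrib, hk2, hk1, Finset.sum_const, hV, smul_eq_mul, mul_assoc] at hs
  omega

theorem main (h : SymPoly P V) {m : ℕ} (hm : 3 ≤ m) (hV : V.card = 2 * m)
    {ι : Type} {x : ι → ℝ × ℝ} {k : ℕ} (hk : 0 < k)
    (htile : IsKFoldTranslativeTiling P x k) :
    (Even m → m - 1 ≤ k) ∧ (Odd m → m - 2 ≤ k) := by
  classical
  obtain ⟨v', hv', v, hv, hne, hsup⟩ := h.exists_edge (by omega)
  have hch := h.chord hv hv' hne (by omega) hsup
  set d := v - v' with hd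
  have hvd : v = v' + d := by rw [hd]; abel
  obtain ⟨i0⟩ : Nonempty ι := by
    obtain ⟨s, hs, -⟩ := htile.2.1 0
    obtain ⟨i, -⟩ := Finset.card_pos.1 (lt_of_lt_of_le hk hs)
    exact ⟨i⟩
  set p' := x i0 + v' with hp'
  have hpd : p' + d = x i0 + v := by rw [hvd, hp', add_assoc]
  set L := ‖p'‖ + ‖d‖ with hL
  obtain ⟨C, hC⟩ := h.bdd.exists_norm_le
  set F : Finset ι := (htile.1 (L + 1 + C)).toFinset with hFdef
  have hF : ∀ i z, ‖z‖ ≤ L + 1 → z - x i ∈ P → i ∈ F := by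
    intro i z hz hi
    rw [hFdef, Set.Finite.mem_toFinset, Set.mem_ofPred_eq]
    have h1 := hC _ hi
    have h2 := norm_sub_le z (z - x i)
    rw [sub_sub_cancel] at h2
    linarith
  have hFi0 : i0 ∈ F := by
    refine hF i0 p' (by rw [hL]; linarith [norm_nonneg d]) ?_
    rw [hp', add_sub_cancel_left]
    exact h.vmem hv'
  -- choose a point slightly further along the edge
  have hev : ∀ᶠ e : ℝ in nhdsWithin 0 (Set.Ioi 0), ∀ i ∈ F,
      (p' - x i ∉ P → p' - x i + e • d ∉ P) ∧
      (p' - x i ∈ interior P → p' - x i + e • d ∈ interior P) := by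
    refine (Filter.eventually_all_finset F).2 (fun i _ => ?_)
    by_cases hqP : p' - x i ∈ P
    · by_cases hqi : p' - x i ∈ interior P
      · filter_upwards [(tendsto_line (p' - x i) d).eventually_mem
          (isOpen_interior.mem_nhds hqi)] with e he
        exact ⟨fun hc => absurd hqP hc, fun _ => he⟩
      · exact Filter.Eventually.of_forall
          fun e => ⟨fun hc => absurd hqP hc, fun hc => absurd hc hqi⟩
    · filter_upwards [(tendsto_line (p' - x i) d).eventually_mem
          (h.closed.isOpen_compl.mem_nhds hqP)] with e he
      exact ⟨fun _ => he, fun hc => absurd (interior_subset hc) hqP⟩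
  have hpos : ∀ᶠ e : ℝ in nhdsWithin 0 (Set.Ioi 0), 0 < e := self_mem_nhdsWithin
  have hlt : ∀ᶠ e : ℝ in nhdsWithin 0 (Set.Ioi 0), e < 1 :=
    nhdsWithin_le_nhds (gt_mem_nhds one_pos)
  obtain ⟨e, ⟨he, hepos⟩, helt⟩ := ((hev.and hpos).and hlt).exists
  set p1 := p' + e • d with hp1
  have n' : ‖p'‖ ≤ L := by rw [hL]; linarith [norm_nonneg d]
  have n1 : ‖p1‖ ≤ L := by
    have h1 := norm_add_le p' (e • d)
    rw [norm_smul, Real.norm_of_nonneg hepos.le] at h1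
    rw [hp1, hL]
    nlinarith [norm_nonneg d]
  have nn : ‖p' + d‖ ≤ L := norm_add_le p' d
  obtain ⟨a', ha', e'⟩ := h.count_all (by omega) hV htile hF n'
  obtain ⟨a, ha, e0⟩ := h.count_all (by omega) hV htile hF nn
  have e1 := h.count htile hF n1 hv
  have a'pos : 1 ≤ a' := by
    rw [← ha' v' hv']
    have : 1 ≤ nv x F p' v' := by
      unfold nv
      have := Finset.single_le_sum (f := fun i => if p' - x i = v' then 1 else 0)
        (fun _ _ => Nat.zero_le _) hFi0
      simpa [hp'] using this
    omega
  have apos : 1 ≤ a := by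
    rw [← ha v hv]
    have : 1 ≤ nv x F (p' + d) v := by
      unfold nv
      have := Finset.single_le_sum (f := fun i => if p' + d - x i = v then 1 else 0)
        (fun _ _ => Nat.zero_le _) hFi0
      simpa [hpd] using this
    omega
  -- behaviour of a single translate between `p'`, `p1` and `p' + d`
  have hq1 : ∀ i, p1 - x i = p' - x i + e • d := fun i => by rw [hp1]; abel
  have hqd : ∀ i, p' + d - x i = p' - x i + d := fun i => by abel
  have r1 : rho P x F p1 ≤ rho P x F p' + rho P x F (p' + d) := by
    unfold rho
    rw [← Finset.sum_add_distrib]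
    apply Finset.sum_le_sum
    intro i hi
    rw [hq1, hqd]
    by_cases hi1 : p' - x i + e • d ∈ interior P
    · by_cases hi2 : p' - x i ∈ interior P
      · simp [hi1, hi2]
      · have hiP : p' - x i ∈ P := by
          by_contra hc
          exact (he i hi).1 hc (interior_subset hi1)
        rcases hch _ hiP hi2 e hepos (interior_subset hi1) with h1 | h1
        · simp [hi1, hi2, h1]
        · exact absurd hi1 h1.1
    · simp [hi1]
  have r2 : ell P V x F p1 + kap V x F p1 ≤
      ell P V x F p' + (nv x F p' v' + nv x F p' (-v)) := by
    unfold ell kap nv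
    simp only [← Finset.sum_add_distrib]
    apply Finset.sum_le_sum
    intro i hi
    rw [hq1]
    by_cases hb : p' - x i + e • d ∈ P ∧ p' - x i + e • d ∉ interior P
    · obtain ⟨hb1, hb2⟩ := hb
      have hi2 : p' - x i ∉ interior P := fun hc => hb2 ((he i hi).2 hc)
      have hiP : p' - x i ∈ P := by
        by_contra hc
        exact (he i hi).1 hc hb1
      have hle : (if p' - x i + e • d ∈ P ∧ p' - x i + e • d ∉ interior P ∧
          p' - x i + e • d ∉ V then 1 else 0) + (if p' - x i + e • d ∈ V then 1 else 0) ≤ 1 := by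
        by_cases h3 : p' - x i + e • d ∈ V <;> simp [h3, hb1, hb2]
      refine hle.trans ?_
      rcases hch _ hiP hi2 e hepos hb1 with h1 | h1
      · exfalso
        apply hb2
        have := h.int_ray (u := -d) (s := 1 - e) (t := 1) h1 (by simpa using hiP)
          (by linarith) (by linarith)
        convert this using 1
        module
      · by_cases h3 : p' - x i ∈ V
        · rcases h1.2 h3 with h4 | h4
          · rw [if_pos h4]; omega
          · rw [if_pos h4]; omega
        · rw [if_pos ⟨hiP, hi2, h3⟩]; omega
    · have h3 : p' - x i + e • d ∉ V := fun hc => hb ⟨h.vmem hc, h.vertex_not_int hc⟩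
      rw [if_neg (fun hc => hb ⟨hc.1, hc.2.1⟩), if_neg h3]
      omega
  have r3 := ha' v' hv'
  have r4 := ha' v hv
  have r5 : m * a' ≤ 2 * rho P x F (p' + d) + 3 * a' := by omega
  have r6 : m ≤ 2 * rho P x F (p' + d) + 3 := by
    obtain ⟨n, rfl⟩ : ∃ n, m = n + 3 := ⟨m - 3, by omega⟩
    have : n * 1 ≤ n * a' := Nat.mul_le_mul_left _ a'pos
    rw [add_mul] at r5
    omega
  rcases Nat.lt_or_ge a 2 with ha2 | ha2
  · have : a = 1 := by omega
    subst this
    constructor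
    · rintro ⟨j, hj⟩; omega
    · intro _; omega
  · have : m - 1 ≤ k := by
      obtain ⟨n, rfl⟩ : ∃ n, m = n + 1 := ⟨m - 1, by omega⟩
      have : n * 2 ≤ n * a := Nat.mul_le_mul_left _ ha2
      rw [add_mul] at e0
      omega
    exact ⟨fun _ => this, fun _ => by omega⟩

end SymPoly

/-- Theorem 1: if a centrally symmetric convex `2m`-gon admits a `k`-fold translative
tiling of the plane, then `k ≥ m - 1` when `m` is even and `k ≥ m - 2` when `m` is odd. -/
theorem multiplicity_lower_bound_2m_gon (m : ℕ) (hm : 0 < m)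
    (P : Set (ℝ × ℝ)) (V : Finset (ℝ × ℝ))
    (hP : IsConvexPolygon P V) (hV : V.card = 2 * m) (hsym : IsCentrallySymmetric P)
    (k : ℕ) (hk : 0 < k) (ι : Type) (x : ι → ℝ × ℝ)
    (htile : IsKFoldTranslativeTiling P x k) :
    (Even m → m - 1 ≤ k) ∧ (Odd m → m - 2 ≤ k) := by

  classical
  rcases Nat.lt_or_ge m 3 with h3 | h3
  · exact ⟨fun _ => by omega, fun _ => by omega⟩
  obtain ⟨hhull, hext, hinterior⟩ := hP
  obtain ⟨c, hc⟩ := hsym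
  -- translate the centre to the origin
  set T : (ℝ × ℝ) → (ℝ × ℝ) := fun z => -c + z with hT
  set Q : Set (ℝ × ℝ) := (fun z => c + z) ⁻¹' P with hQ
  set W : Finset (ℝ × ℝ) := V.image T with hW
  have hmemQ : ∀ z, z ∈ Q ↔ c + z ∈ P := fun z => Iff.rfl
  have hintQ : ∀ z, z ∈ interior Q ↔ c + z ∈ interior P := by
    intro z
    have := (Homeomorph.addLeft c).preimage_interior P
    have h2 : interior Q = (fun z => c + z) ⁻¹' interior P := this.symm
    rw [h2]; rfl
  have hQhull : Q = convexHull ℝ (W : Set (ℝ × ℝ)) := by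
    have h1 : (W : Set (ℝ × ℝ)) = (-c) +ᵥ (V : Set (ℝ × ℝ)) := by
      rw [hW, Finset.coe_image]; rfl
    rw [h1, convexHull_vadd, ← hhull]
    ext z
    rw [hmemQ, Set.mem_vadd_set_iff_neg_vadd_mem, neg_neg, vadd_eq_add]
  have hconv : Convex ℝ Q := by rw [hQhull]; exact convex_convexHull ℝ _
  have hcomp : IsCompact Q := by rw [hQhull]; exact W.finite_toSet.isCompact_convexHull ℝ
  have hsymQ : ∀ p ∈ Q, -p ∈ Q := by
    intro p hp
    rw [hmemQ] at hp ⊢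
    have := hc _ hp
    convert this using 1
    rw [two_smul]; abel
  have hcard : W.card = 2 * m := by
    rw [hW, Finset.card_image_of_injective _ (add_right_injective (-c)), hV]
  have hS : SymPoly Q W := by
    refine ⟨hconv, hcomp.isClosed, hcomp.isBounded, hsymQ, ?_, hQhull, ?_⟩
    · obtain ⟨z, hz⟩ := hinterior
      have hz1 : z - c ∈ interior Q := by rw [hintQ]; simpa using hz
      have hz2 : -(z - c) ∈ Q := hsymQ _ (interior_subset hz1)
      have := hconv.combo_interior_closure_mem_interior hz1 (subset_closure hz2)
        (a := 1 / 2) (b := 1 / 2) (by norm_num) (by norm_num) (by norm_num)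
      convert this using 1
      module
    · intro w
      constructor
      · intro hw
        obtain ⟨v, hv, rfl⟩ := Finset.mem_image.1 hw
        have hE := hext v hv
        refine ⟨by rw [hmemQ]; simpa [hT] using hE.1, ?_⟩
        intro a ha b hb hab
        have := hE.2 ((hmemQ a).1 ha) ((hmemQ b).1 hb) (by
          obtain ⟨s, t, hs, ht, hst, he⟩ := hab
          refine ⟨s, t, hs, ht, hst, ?_⟩
          have h1 : s • (c + a) + t • (c + b) = (s + t) • c + (s • a + t • b) := by module
          rw [h1, he, hst, hT]
          simp)
        rw [hT, ← this]
        simp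
      · intro hw
        have : w ∈ (W : Set (ℝ × ℝ)) := by
          apply extremePoints_convexHull_subset (𝕜 := ℝ)
          rw [← hQhull]
          exact hw
        exact this
  have htileQ : IsKFoldTranslativeTiling Q (fun i => x i + c) k := by
    have hz : ∀ (p : ℝ × ℝ) i, c + (p - (x i + c)) = p - x i := fun p i => by abel
    refine ⟨fun R => ?_, fun p => ?_, fun p s hs => ?_⟩
    · refine (htile.1 (R + ‖c‖)).subset ?_
      intro i hi
      have hi : ‖x i + c‖ ≤ R := hi
      have := norm_sub_le (x i + c) c
      rw [add_sub_cancel_right] at this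
      exact this.trans (by linarith)
    · obtain ⟨s, hs, hsP⟩ := htile.2.1 p
      exact ⟨s, hs, fun i hi => by rw [hmemQ, hz]; exact hsP i hi⟩
    · refine htile.2.2 p s (fun i hi => ?_)
      have := hs i hi
      rwa [hintQ, hz] at this
  exact hS.main h3 hcard hk htileQ
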